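/- arXiv:2401.02700 — 2 statements merged into one kernel-verified Lean document; each statement's English description precedes it below -/
import Mathlib

section
/- Let f : ℝ → ℝ be a polynomial of degree at most q with |f(x)| ≤ 1 for all x ∈ [−1, 1]. Then for all x ∈ [−1, 1], |f'(x)| ≤ q². -/
namespace MarkovAux

open Polynomial Finset

/-- Riesz nodes. -/
noncomputable def nd (n k : ℕ) : ℝ := (2 * k + 1) * Real.pi / (2 * n)

/-- Riesz weights. -/
noncomputable def wt (n k : ℕ) : ℝ := (-1) ^ k / (4 * n * Real.sin (nd n k / 2) ^ 2)

lemma sin_n_nd {n : ℕ} (hn : n ≠ 0) (k : ℕ) : Real.sin (n * nd n k) = (-1) ^ k := by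
  have : n * nd n k = Real.pi / 2 + k * Real.pi := by
    unfold nd; field_simp; ring
  rw [this, Real.sin_add_nat_mul_pi]; simp

lemma cos_n_nd {n : ℕ} (hn : n ≠ 0) (k : ℕ) : Real.cos (n * nd n k) = 0 := by
  have : n * nd n k = Real.pi / 2 + k * Real.pi := by
    unfold nd; field_simp; ring
  rw [this, Real.cos_add_nat_mul_pi]; simp

lemma sin_half_pos {n k : ℕ} (hk : k < 2 * n) : 0 < Real.sin (nd n k / 2) := by
  have hn : (0 : ℝ) < n := by
    have : 0 < n := by omega
    exact_mod_cast this
  have hk' : (k : ℝ) + 1 ≤ 2 * n := by exact_mod_cast hk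
  have hpi := Real.pi_pos
  apply Real.sin_pos_of_pos_of_lt_pi
  · unfold nd; positivity
  · unfold nd
    rw [div_div, div_lt_iff₀ (by positivity)]
    nlinarith

lemma wt_mul {n k : ℕ} (hk : k < 2 * n) :
    wt n k * (2 * Real.cos (nd n k) - 2) = -((-1) ^ k / n) := by
  have h := (sin_half_pos hk).ne'
  have hn : (n : ℝ) ≠ 0 := by
    have : n ≠ 0 := by omega
    exact_mod_cast this
  have h2 : Real.cos (nd n k) = 1 - 2 * Real.sin (nd n k / 2) ^ 2 := by
    have := Real.cos_two_mul (nd n k / 2)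
    rw [show 2 * (nd n k / 2) = nd n k by ring] at this
    rw [this, Real.cos_sq']; ring
  rw [h2, wt]
  field_simp
  ring

lemma orth_complex {n m : ℕ} (hm : m < n) :
    ∑ k ∈ range (2 * n), (-1 : ℂ) ^ k * Complex.exp ((m * nd n k : ℝ) * Complex.I) = 0 := by
  have hn : (n : ℂ) ≠ 0 := by
    have : n ≠ 0 := by omega
    exact_mod_cast this
  set r : ℂ := -Complex.exp ((m * Real.pi / n : ℝ) * Complex.I) with hr
  have h1 : ∀ k, (-1 : ℂ) ^ k * Complex.exp ((m * nd n k : ℝ) * Complex.I) =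
      Complex.exp ((m * Real.pi / (2 * n) : ℝ) * Complex.I) * r ^ k := by
    intro k
    rw [hr, neg_pow (Complex.exp _), ← Complex.exp_nat_mul, mul_left_comm, ← Complex.exp_add]
    congr 2
    unfold nd
    push_cast
    field_simp
    ring
  simp_rw [h1]
  rw [← mul_sum]
  have hpow : r ^ (2 * n) = 1 := by
    rw [hr, neg_pow, ← Complex.exp_nat_mul, pow_mul]
    have : ((2 * n : ℕ) : ℂ) * ((m * Real.pi / n : ℝ) * Complex.I) =
        m * (2 * Real.pi * Complex.I) := by
      push_cast; field_simp
    rw [this, Complex.exp_nat_mul_two_pi_mul_I]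
    simp
  have hne : r ≠ 1 := by
    intro h
    have hre : Real.cos (m * Real.pi / n) = -1 := by
      have := congrArg Complex.re h
      rw [hr, Complex.neg_re, Complex.exp_ofReal_mul_I_re] at this
      simp at this; linarith
    have hnr : (0 : ℝ) < n := by
      have : 0 < n := by omega
      exact_mod_cast this
    have hmr : (m : ℝ) < n := by exact_mod_cast hm
    have hpi := Real.pi_pos
    have hlt : m * Real.pi / n < Real.pi := by
      rw [div_lt_iff₀ hnr]; nlinarith
    have := Real.cos_lt_cos_of_nonneg_of_le_pi (by positivity) le_rfl hlt
    rw [Real.cos_pi] at this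
    linarith
  have hg := mul_geom_sum r (2 * n)
  rw [hpow, sub_self] at hg
  rcases mul_eq_zero.mp hg with h | h
  · exact absurd (sub_eq_zero.mp h) hne
  · rw [h, mul_zero]

lemma orth_cos {n m : ℕ} (hm : m < n) :
    ∑ k ∈ range (2 * n), (-1 : ℝ) ^ k * Real.cos (m * nd n k) = 0 := by
  have h := congrArg Complex.re (orth_complex hm)
  rw [Complex.re_sum] at h
  rw [← Complex.zero_re, ← h]
  refine sum_congr rfl fun k _ => ?_
  rw [show (-1 : ℂ) ^ k = (((-1) ^ k : ℝ) : ℂ) by push_cast; rfl, Complex.re_ofReal_mul,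
    Complex.exp_ofReal_mul_I_re]

lemma orth_sin {n m : ℕ} (hm : m < n) :
    ∑ k ∈ range (2 * n), (-1 : ℝ) ^ k * Real.sin (m * nd n k) = 0 := by
  have h := congrArg Complex.im (orth_complex hm)
  rw [Complex.im_sum] at h
  rw [← Complex.zero_im, ← h]
  refine sum_congr rfl fun k _ => ?_
  rw [show (-1 : ℂ) ^ k = (((-1) ^ k : ℝ) : ℂ) by push_cast; rfl, Complex.im_ofReal_mul,
    Complex.exp_ofReal_mul_I_im]

/-- cosine sums -/
noncomputable def cs (n m : ℕ) : ℝ := ∑ k ∈ range (2 * n), wt n k * Real.cos (m * nd n k)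
/-- sine sums -/
noncomputable def sn (n m : ℕ) : ℝ := ∑ k ∈ range (2 * n), wt n k * Real.sin (m * nd n k)

lemma cs_rec (n m : ℕ) : cs n (m + 2) - 2 * cs n (m + 1) + cs n m =
    -((∑ k ∈ range (2 * n), (-1 : ℝ) ^ k * Real.cos ((m + 1 : ℕ) * nd n k)) / n) := by
  unfold cs
  rw [mul_sum, ← sum_sub_distrib, ← sum_add_distrib, sum_div, ← sum_neg_distrib]
  refine sum_congr rfl fun k hk => ?_
  have h := wt_mul (mem_range.mp hk)
  have e1 : ((m + 2 : ℕ) : ℝ) * nd n k = (m + 1 : ℕ) * nd n k + nd n k := by push_cast; ring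
  have e2 : (m : ℝ) * nd n k = (m + 1 : ℕ) * nd n k - nd n k := by push_cast; ring
  rw [e1, e2, Real.cos_add, Real.cos_sub]
  linear_combination Real.cos ((m + 1 : ℕ) * nd n k) * h

lemma sn_rec (n m : ℕ) : sn n (m + 2) - 2 * sn n (m + 1) + sn n m =
    -((∑ k ∈ range (2 * n), (-1 : ℝ) ^ k * Real.sin ((m + 1 : ℕ) * nd n k)) / n) := by
  unfold sn
  rw [mul_sum, ← sum_sub_distrib, ← sum_add_distrib, sum_div, ← sum_neg_distrib]
  refine sum_congr rfl fun k hk => ?_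
  have h := wt_mul (mem_range.mp hk)
  have e1 : ((m + 2 : ℕ) : ℝ) * nd n k = (m + 1 : ℕ) * nd n k + nd n k := by push_cast; ring
  have e2 : (m : ℝ) * nd n k = (m + 1 : ℕ) * nd n k - nd n k := by push_cast; ring
  rw [e1, e2, Real.sin_add, Real.sin_sub]
  linear_combination Real.sin ((m + 1 : ℕ) * nd n k) * h

lemma cs_one {n : ℕ} (hn : n ≠ 0) : cs n 1 = cs n 0 := by
  have h0 := orth_cos (Nat.pos_of_ne_zero hn)
  have : 2 * (cs n 1 - cs n 0) =
      -((∑ k ∈ range (2 * n), (-1 : ℝ) ^ k * Real.cos ((0 : ℕ) * nd n k)) / n) := by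
    unfold cs
    rw [← sum_sub_distrib, mul_sum, sum_div, ← sum_neg_distrib]
    refine sum_congr rfl fun k hk => ?_
    have h := wt_mul (mem_range.mp hk)
    simp only [Nat.cast_zero, zero_mul, Real.cos_zero, Nat.cast_one, one_mul, mul_one]
    linear_combination h
  rw [h0] at this
  simp at this
  linarith

lemma cs_zero {n m : ℕ} (hn : n ≠ 0) (hm : m ≤ n) : cs n m = 0 := by
  have step : ∀ j, j < n → cs n (j + 1) = cs n j := by
    intro j
    induction j with
    | zero => intro _; exact cs_one hn
    | succ j ih =>
      intro hj
      have h := cs_rec n j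
      rw [orth_cos hj] at h
      have := ih (by omega)
      simp only [zero_div, neg_zero] at h
      rw [show j + 1 + 1 = j + 2 from rfl]
      linarith
  have const : ∀ j, j ≤ n → cs n j = cs n 0 := by
    intro j
    induction j with
    | zero => intro _; rfl
    | succ j ih => intro hj; rw [step j (by omega), ih (by omega)]
  have hlast : cs n n = 0 := by
    unfold cs
    exact sum_eq_zero fun k _ => by rw [cos_n_nd hn, mul_zero]
  rw [const m hm, ← const n le_rfl, hlast]

lemma sn_eq {n m : ℕ} (hn : n ≠ 0) (hm : m ≤ n) : sn n m = m := by
  have s0 : sn n 0 = 0 := by simp [sn]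
  have lin : ∀ j, j < n → sn n (j + 1) - sn n j = sn n 1 := by
    intro j
    induction j with
    | zero => intro _; simp [s0]
    | succ j ih =>
      intro hj
      have h := sn_rec n j
      rw [orth_sin hj] at h
      have := ih (by omega)
      simp only [zero_div, neg_zero] at h
      rw [show j + 1 + 1 = j + 2 from rfl]
      linarith
  obtain ⟨p, rfl⟩ := Nat.exists_eq_succ_of_ne_zero hn
  have hl := lin p (by omega)
  have hr := sn_rec (p + 1) p
  have hs : (∑ k ∈ range (2 * (p + 1)), (-1 : ℝ) ^ k * Real.sin ((p + 1 : ℕ) * nd (p + 1) k))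
      = 2 * (p + 1 : ℕ) := by
    have : ∀ k ∈ range (2 * (p + 1)),
        (-1 : ℝ) ^ k * Real.sin ((p + 1 : ℕ) * nd (p + 1) k) = 1 := by
      intro k _
      rw [sin_n_nd hn, ← mul_pow]; simp
    rw [sum_congr rfl this]; simp
  rw [hs] at hr
  have hsym : sn (p + 1) (p + 2) = sn (p + 1) p := by
    unfold sn
    refine sum_congr rfl fun k _ => ?_
    have hc := cos_n_nd hn k
    have e1 : ((p + 2 : ℕ) : ℝ) * nd (p + 1) k = (p + 1 : ℕ) * nd (p + 1) k + nd (p + 1) k := by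
      push_cast; ring
    have e2 : (p : ℝ) * nd (p + 1) k = (p + 1 : ℕ) * nd (p + 1) k - nd (p + 1) k := by
      push_cast; ring
    rw [Nat.succ_eq_add_one] at hc
    rw [e1, e2, Real.sin_add, Real.sin_sub, hc]; ring
  have hp : ((p + 1 : ℕ) : ℝ) ≠ 0 := by positivity
  rw [hsym, mul_div_assoc, div_self hp] at hr
  have h1 : sn (p + 1) 1 = 1 := by
    have hl' : sn (p + 1) (p + 1) - sn (p + 1) p = sn (p + 1) 1 := hl
    linarith
  induction m with
  | zero => simpa using s0
  | succ j ih =>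
    have a := lin j (by omega)
    have b := ih (by omega)
    simp only [Nat.succ_eq_add_one] at a b ⊢
    push_cast
    linarith

lemma sum_abs_wt {n : ℕ} (hn : n ≠ 0) : ∑ k ∈ range (2 * n), |wt n k| = n := by
  rw [← sn_eq hn le_rfl, sn]
  refine sum_congr rfl fun k hk => ?_
  rw [sin_n_nd hn, wt, abs_div, abs_neg_one_pow, abs_of_nonneg (by positivity), div_mul_eq_mul_div,
    ← mul_pow]
  simp

lemma sum_bound {n : ℕ} (hn : n ≠ 0) (g : ℕ → ℝ) (B : ℝ) (hg : ∀ k, |g k| ≤ B) :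
    |∑ k ∈ range (2 * n), wt n k * g k| ≤ n * B := by
  rw [← sum_abs_wt hn, sum_mul]
  refine (abs_sum_le_sum_abs _ _).trans (sum_le_sum fun k _ => ?_)
  rw [abs_mul]
  exact mul_le_mul_of_nonneg_left (hg k) (abs_nonneg _)

lemma T_span_induct {n : ℕ} {f : ℝ[X]} (hf : f.natDegree ≤ n) :
    ∃ c : ℕ → ℝ, f = ∑ i ∈ range (n + 1), c i • Chebyshev.T ℝ i := by
  have hmem : f ∈ degreeLT ℝ (n + 1) := by
    rw [mem_degreeLT]
    exact lt_of_le_of_lt (natDegree_le_iff_degree_le.mp hf) (by exact_mod_cast Nat.lt_succ_self n)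
  rw [← Sequence.span_degreeLT (Chebyshev.chebyshevTsequence ℝ) (by simp),
    show Set.Iio (n + 1) = Finset.range (n + 1) by simp,
    Submodule.mem_span_image_finset_iff_exists_fun'] at hmem
  obtain ⟨c, rfl⟩ := hmem
  exact ⟨c, rfl⟩

lemma T_deriv_cos (m : ℕ) (θ : ℝ) :
    (derivative (Chebyshev.T ℝ m)).eval (Real.cos θ) * Real.sin θ = m * Real.sin (m * θ) := by
  rw [Chebyshev.T_derivative_eq_U, eval_mul, mul_assoc, Chebyshev.U_real_cos]
  simp

lemma formA {n : ℕ} (hn : n ≠ 0) {f : ℝ[X]} (hf : f.natDegree ≤ n) (θ : ℝ) :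
    (derivative f).eval (Real.cos θ) * Real.sin θ =
      -∑ k ∈ range (2 * n), wt n k * f.eval (Real.cos (θ + nd n k)) := by
  obtain ⟨c, rfl⟩ := T_span_induct hf
  simp only [derivative_sum, derivative_smul, eval_finsetSum, eval_smul, smul_eq_mul, sum_mul,
    mul_sum]
  rw [sum_comm, ← sum_neg_distrib]
  refine sum_congr rfl fun m hm => ?_
  rw [mul_assoc, T_deriv_cos]
  have hm' : m ≤ n := by have := mem_range.mp hm; omega
  have h1 := cs_zero hn hm'
  have h2 := sn_eq hn hm'
  have : ∑ k ∈ range (2 * n), wt n k * (c m * (Chebyshev.T ℝ m).eval (Real.cos (θ + nd n k))) =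
      c m * (Real.cos (m * θ) * cs n m - Real.sin (m * θ) * sn n m) := by
    unfold cs sn
    rw [mul_sum, mul_sum, ← sum_sub_distrib, mul_sum]
    refine sum_congr rfl fun k _ => ?_
    rw [Chebyshev.T_real_cos, mul_add, Int.cast_natCast, Real.cos_add]
    ring
  rw [this, h1, h2]; ring

lemma formB {n : ℕ} (hn : n ≠ 0) {f : ℝ[X]} (hf : f.natDegree ≤ n) :
    (derivative f).eval 1 = ∑ k ∈ range (2 * n), wt n k *
      ((derivative f).eval (Real.cos (nd n k)) * Real.sin (nd n k)) := by
  obtain ⟨c, rfl⟩ := T_span_induct hf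
  simp only [derivative_sum, derivative_smul, eval_finsetSum, eval_smul, smul_eq_mul, sum_mul,
    mul_sum]
  rw [sum_comm]
  refine sum_congr rfl fun m hm => ?_
  have hm' : m ≤ n := by have := mem_range.mp hm; omega
  have h2 := sn_eq hn hm'
  have : ∑ k ∈ range (2 * n), wt n k * (c m * (derivative (Chebyshev.T ℝ m)).eval
      (Real.cos (nd n k)) * Real.sin (nd n k)) = c m * (m * sn n m) := by
    unfold sn
    rw [mul_sum, mul_sum]
    refine sum_congr rfl fun k _ => ?_
    rw [mul_assoc (c m), T_deriv_cos]
    ring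
  rw [this, h2, Chebyshev.derivative_T_eval_one]
  push_cast; ring

lemma bernstein {n : ℕ} (hn : n ≠ 0) {f : ℝ[X]} (hf : f.natDegree ≤ n)
    (hb : ∀ x ∈ Set.Icc (-1 : ℝ) 1, |f.eval x| ≤ 1) (θ : ℝ) :
    |(derivative f).eval (Real.cos θ) * Real.sin θ| ≤ n := by
  rw [formA hn hf, abs_neg]
  refine (sum_bound hn _ 1 fun k => hb _ (Real.cos_mem_Icc _)).trans (by simp)

end MarkovAux

/-- Markov brothers' inequality: a real polynomial of degree at most `q` bounded by 1 on
`[-1,1]` has derivative bounded by `q²` on `[-1,1]`. -/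
theorem stmt5 (q : ℕ) (f : Polynomial ℝ) (hdeg : f.natDegree ≤ q)
    (hb : ∀ x ∈ Set.Icc (-1 : ℝ) 1, |f.eval x| ≤ 1) :
    ∀ x ∈ Set.Icc (-1 : ℝ) 1, |f.derivative.eval x| ≤ (q : ℝ) ^ 2 := by
  intro x hx
  rcases Nat.eq_zero_or_pos q with rfl | hq
  · rw [Polynomial.derivative_of_natDegree_zero (by omega)]; simp
  have hn : q ≠ 0 := hq.ne'
  by_cases hx0 : x = 0
  · have h := MarkovAux.bernstein hn hdeg hb (Real.pi / 2)
    rw [Real.cos_pi_div_two, Real.sin_pi_div_two, mul_one] at h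
    have : (1 : ℝ) ≤ q := by exact_mod_cast hq
    rw [hx0]
    nlinarith
  -- rescale
  set g : Polynomial ℝ := f.comp (Polynomial.C x * Polynomial.X) with hg
  have hgdeg : g.natDegree ≤ q := by
    refine (Polynomial.natDegree_comp_le).trans ?_
    have : (Polynomial.C x * Polynomial.X : Polynomial ℝ).natDegree ≤ 1 := by
      compute_degree
    nlinarith
  have hgd : ∀ s, g.derivative.eval s = x * f.derivative.eval (x * s) := by
    intro s
    simp [hg, Polynomial.derivative_comp]
  have hB := MarkovAux.formB hn hgdeg
  have hbound : ∀ k : ℕ, |g.derivative.eval (Real.cos (MarkovAux.nd q k)) *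
      Real.sin (MarkovAux.nd q k)| ≤ |x| * q := by
    intro k
    set t := MarkovAux.nd q k
    have hx2 : x ^ 2 ≤ 1 := by nlinarith [hx.1, hx.2]
    have hc2 := Real.sin_sq_add_cos_sq t
    have hs2 : (x * Real.cos t) ^ 2 ≤ Real.cos t ^ 2 := by
      rw [mul_pow]; nlinarith [sq_nonneg (Real.cos t)]
    have hy : (x * Real.cos t) ^ 2 ≤ 1 := by nlinarith [sq_nonneg (Real.sin t)]
    have hy' := abs_le.mp ((sq_le_one_iff_abs_le_one _).mp hy)
    have h := MarkovAux.bernstein hn hdeg hb (Real.arccos (x * Real.cos t))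
    rw [Real.cos_arccos hy'.1 hy'.2, Real.sin_arccos] at h
    rw [hgd, mul_assoc, abs_mul]
    refine mul_le_mul_of_nonneg_left (le_trans ?_ h) (abs_nonneg x)
    rw [abs_mul, abs_mul]
    refine mul_le_mul_of_nonneg_left ?_ (abs_nonneg _)
    rw [abs_of_nonneg (Real.sqrt_nonneg _)]
    exact Real.abs_le_sqrt (by nlinarith)
  have hfin := MarkovAux.sum_bound hn _ _ hbound
  rw [← hB, hgd, mul_one, abs_mul] at hfin
  have hxp : 0 < |x| := abs_pos.mpr hx0
  refine le_of_mul_le_mul_left (hfin.trans (le_of_eq ?_)) hxp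
  ring
end

section
/- Let H be a Hermitian operator on a finite-dimensional Hilbert space with ‖H‖ ≤ 1, with spectral decomposition H = ∑_n E_n |φ_n⟩⟨φ_n|. Let ψ be a unit vector, Ẽ ∈ [−1,1] real with ‖(H − Ẽ)ψ‖ ≤ η, and let f be a real polynomial of degree q satisfying |f(x)| ≤ 1 on [−1,1]. Then ‖f(H)ψ − f(Ẽ)ψ‖ ≤ q²·η. -/
open scoped InnerProductSpace

namespace MarkovAux
open Polynomial Polynomial.Chebyshev Real

/-- Schur's inequality to the right of the largest Chebyshev root. -/
lemma schur_right {n : ℕ} (hn : n ≠ 0) (S : ℝ[X]) (hdeg : S.degree < n)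
    (hS : ∀ θ : ℝ, |S.eval (cos θ) * sin θ| ≤ 1) (y : ℝ) (hy1 : y ≤ 1)
    (hy : cos (π / (2 * n)) < y) : |S.eval y| ≤ n := by
  have hn0 : (0 : ℝ) < n := by positivity
  set s : Finset ℝ := (Finset.range n).image (fun (k : ℕ) => cos ((2 * k + 1) * π / (2 * n))) with hs
  have hroots : (T ℝ n).roots = s.val := roots_T_real n
  have hcard : s.card = n := by
    rw [hs, Finset.card_image_of_injOn, Finset.card_range]
    exact (Finset.range n).nodup_map_iff_injOn.mp (roots_T_real_nodup n)
  have hT : T ℝ n = C (T ℝ n).leadingCoeff * Lagrange.nodal s id := by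
    have h := C_leadingCoeff_mul_prod_multiset_X_sub_C (p := T ℝ n) (by
      rw [hroots, natDegree_T]; simpa using hcard)
    rw [hroots] at h
    rw [Lagrange.nodal_eq]
    exact h.symm
  set c := (T ℝ n).leadingCoeff with hc
  have hT' : ∀ x, (derivative (T ℝ n)).eval x = c * (derivative (Lagrange.nodal s id)).eval x := by
    intro x
    conv_lhs => rw [hT]
    simp
  have hnode : ∀ r ∈ s, ∃ t, r = cos t ∧ 0 < sin t ∧ |(derivative (T ℝ n)).eval r| * sin t = n
      ∧ r < y := by
    intro r hr
    obtain ⟨k, hk, rfl⟩ := Finset.mem_image.mp hr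
    have hk := Finset.mem_range.mp hk
    have hk' : (k : ℝ) + 1 ≤ n := by exact_mod_cast hk
    have h1 : 0 < (2 * k + 1) * π / (2 * n) := by positivity
    have h2 : (2 * k + 1) * π / (2 * n) < π := by
      rw [div_lt_iff₀ (by positivity)]
      nlinarith [pi_pos]
    have hsin := sin_pos_of_pos_of_lt_pi h1 h2
    refine ⟨_, rfl, hsin, ?_, ?_⟩
    · rw [T_derivative_eq_U, ← abs_of_pos hsin, ← abs_mul]
      have hU := U_real_cos ((2 * k + 1) * π / (2 * n)) ((n : ℤ) - 1)
      have : (((n : ℤ) - 1 : ℤ) + 1 : ℝ) * ((2 * k + 1) * π / (2 * n)) = k * π + π / 2 := by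
        push_cast
        field_simp
        ring
      rw [this, sin_add_pi_div_two] at hU
      simp only [eval_mul, eval_intCast, Int.cast_natCast, eval_natCast, mul_assoc]
      rw [hU, abs_mul, abs_cos_eq_sqrt_one_sub_sin_sq, sin_nat_mul_pi]
      simp
    · refine lt_of_le_of_lt ?_ hy
      apply cos_le_cos_of_nonneg_of_le_pi (by positivity) h2.le
      gcongr
      nlinarith [pi_pos, mul_nonneg (Nat.cast_nonneg (α := ℝ) k) pi_pos.le]
  have hpos : ∀ r ∈ s, 0 < (Lagrange.nodal (s.erase r) id).eval y := by
    intro r hr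
    rw [Lagrange.eval_nodal]
    refine Finset.prod_pos fun i hi => ?_
    obtain ⟨_, _, _, _, h⟩ := hnode i (Finset.mem_of_mem_erase hi)
    simpa using h
  have hint := Lagrange.eq_interpolate (s := s) (v := id) (f := S) (Set.injOn_id _) (by rwa [hcard])
  have hSy : S.eval y = ∑ r ∈ s, (Lagrange.nodal (s.erase r) id).eval y *
      ((derivative (Lagrange.nodal s id)).eval r)⁻¹ * S.eval r := by
    conv_lhs => rw [hint]
    rw [Lagrange.eval_interpolate_not_at_node _ (fun i hi => by
      obtain ⟨_, _, _, _, h⟩ := hnode i hi; exact h.ne')]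
    rw [Finset.mul_sum]
    refine Finset.sum_congr rfl fun r hr => ?_
    obtain ⟨_, _, _, _, h⟩ := hnode r hr
    rw [Lagrange.nodalWeight_eq_eval_derivative_nodal hr, Lagrange.nodal_eq_mul_nodal_erase hr]
    have : y - r ≠ 0 := by linarith
    simp only [eval_mul, eval_sub, eval_X, eval_C, id]
    field_simp
  have hbound : |S.eval y| ≤ ∑ r ∈ s, (Lagrange.nodal (s.erase r) id).eval y * (|c| / n) := by
    rw [hSy]
    refine (Finset.abs_sum_le_sum_abs _ _).trans (Finset.sum_le_sum fun r hr => ?_)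
    obtain ⟨t, rt, ht, hd, h⟩ := hnode r hr
    rw [mul_assoc, abs_mul, abs_of_pos (hpos r hr)]
    refine mul_le_mul_of_nonneg_left ?_ (hpos r hr).le
    have hSt := hS t
    rw [← rt, abs_mul, abs_of_pos ht] at hSt
    rw [hT', abs_mul] at hd
    have hN : 0 < |(derivative (Lagrange.nodal s id)).eval r| := by
      rcases (abs_nonneg ((derivative (Lagrange.nodal s id)).eval r)).eq_or_lt with h0 | h0
      · rw [← h0] at hd; simp at hd; exact absurd hd.symm hn0.ne'
      · exact h0
    rw [abs_mul, abs_inv, inv_mul_eq_div, div_le_div_iff₀ hN hn0, ← hd]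
    have := mul_le_mul_of_nonneg_left hSt (mul_nonneg (abs_nonneg c) hN.le)
    nlinarith
  have hTy : |(derivative (T ℝ n)).eval y| ≤ (n : ℝ) ^ 2 := by
    have h := abs_iterate_derivative_T_real_le n 1 (x := y) (by
      rw [abs_le]; refine ⟨?_, hy1⟩; linarith [neg_one_le_cos (π / (2 * n))])
    simpa [derivative_T_eval_one] using h
  refine hbound.trans ?_
  rw [← Finset.sum_mul, ← eval_finsetSum, ← Lagrange.derivative_nodal]
  rw [hT', abs_mul] at hTy
  rw [mul_div_assoc', div_le_iff₀ hn0]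
  nlinarith [le_abs_self ((derivative (Lagrange.nodal s id)).eval y), abs_nonneg c,
    mul_le_mul_of_nonneg_left (le_abs_self ((derivative (Lagrange.nodal s id)).eval y))
      (abs_nonneg c)]

/-- Schur's inequality. -/
lemma schur {n : ℕ} (hn : n ≠ 0) (S : ℝ[X]) (hdeg : S.degree < n)
    (hS : ∀ θ : ℝ, |S.eval (cos θ) * sin θ| ≤ 1) (y : ℝ) (hy : y ∈ Set.Icc (-1 : ℝ) 1) :
    |S.eval y| ≤ n := by
  have hn0 : (0 : ℝ) < n := by positivity
  have hn1 : (1 : ℝ) ≤ n := by exact_mod_cast Nat.one_le_iff_ne_zero.mpr hn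
  rcases lt_or_ge (cos (π / (2 * n))) y with h | h
  · exact schur_right hn S hdeg hS y hy.2 h
  rcases lt_or_ge (cos (π / (2 * n))) (-y) with h' | h'
  · have := schur_right hn (S.comp (-X)) (by
      refine lt_of_le_of_lt degree_le_natDegree ?_
      have := natDegree_comp (p := S) (q := -X)
      rw [natDegree_neg, natDegree_X, mul_one] at this
      rw [this]
      have hlt : S.natDegree < n := by
        rcases eq_or_ne S 0 with h0 | h0
        · rw [h0, natDegree_zero]; exact Nat.pos_of_ne_zero hn
        · exact (natDegree_lt_iff_degree_lt h0).2 hdeg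
      exact_mod_cast hlt) (by
      intro θ
      have := hS (θ + π)
      rw [cos_add_pi, sin_add_pi, mul_neg, abs_neg] at this
      simpa [eval_comp] using this) (-y) (by linarith [hy.1]) h'
    simpa [eval_comp] using this
  · have hb := hS (arccos y)
    rw [cos_arccos hy.1 hy.2, sin_arccos, abs_mul, abs_of_nonneg (sqrt_nonneg _)] at hb
    have h1 : π / (2 * n) ≤ π / 2 := by gcongr; linarith
    have hsin := mul_le_sin (x := π / (2 * n)) (by positivity) h1
    have e : 2 / π * (π / (2 * n)) = 1 / n := by
      have := pi_pos.ne'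
      field_simp
    rw [e] at hsin
    have hsq : 1 / (n : ℝ) ≤ √(1 - y ^ 2) := by
      apply le_sqrt_of_sq_le
      have h2 := sin_sq_add_cos_sq (π / (2 * n))
      have h3 : y ^ 2 ≤ cos (π / (2 * n)) ^ 2 := by
        apply sq_le_sq'
        · linarith
        · exact h
      have h4 : (1 / (n : ℝ)) ^ 2 ≤ sin (π / (2 * n)) ^ 2 := by gcongr
      linarith
    have := mul_le_mul_of_nonneg_left hsq (abs_nonneg (S.eval y))
    have h5 : |S.eval y| * (1 / n) ≤ 1 := this.trans hb
    rwa [mul_one_div, div_le_one hn0] at h5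

/-- Expansion of `P (cos (θ + φ))` in `φ`. -/
lemma expand_pow (θ : ℝ) (m : ℕ) : ∃ A B : ℝ[X], A.degree < (m + 1 : ℕ) ∧ B.degree < m ∧
    ∀ φ, cos (θ + φ) ^ m = A.eval (cos φ) + sin φ * B.eval (cos φ) := by
  induction m with
  | zero => exact ⟨1, 0, by simp, by simp [bot_lt_iff_ne_bot], by simp⟩
  | succ m ih =>
    obtain ⟨A, B, hA, hB, h⟩ := ih
    refine ⟨C (cos θ) * (X * A) - C (sin θ) * ((1 - X ^ 2) * B),
      C (cos θ) * (X * B) - C (sin θ) * A, ?_, ?_, ?_⟩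
    · rw [degree_lt_iff_coeff_zero] at *
      intro k hk
      obtain ⟨j, rfl⟩ : ∃ j, k = j + 2 := ⟨k - 2, by omega⟩
      simp only [coeff_sub, coeff_C_mul, sub_mul, one_mul, coeff_X_mul, coeff_X_pow_mul]
      rw [hA _ (by omega), hB _ (by omega), hB _ (by omega)]
      simp
    · rw [degree_lt_iff_coeff_zero] at *
      intro k hk
      obtain ⟨j, rfl⟩ : ∃ j, k = j + 1 := ⟨k - 1, by omega⟩
      simp only [coeff_sub, coeff_C_mul, coeff_X_mul]
      rw [hA _ (by omega), hB _ (by omega)]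
      simp
    · intro φ
      rw [pow_succ, h φ, cos_add]
      simp only [eval_sub, eval_mul, eval_C, eval_X, eval_one, eval_pow]
      have := sin_sq φ
      linear_combination (- sin θ * B.eval (cos φ)) * this

lemma expand {n : ℕ} (P : ℝ[X]) (hP : P.natDegree ≤ n) (θ : ℝ) : ∃ A B : ℝ[X], B.degree < n ∧
    ∀ φ, P.eval (cos (θ + φ)) = A.eval (cos φ) + sin φ * B.eval (cos φ) := by
  choose A B hA hB h using expand_pow θ
  refine ⟨∑ i ∈ Finset.range (n + 1), C (P.coeff i) * A i,
    ∑ i ∈ Finset.range (n + 1), C (P.coeff i) * B i, ?_, ?_⟩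
  · rw [degree_lt_iff_coeff_zero]
    intro k hk
    rw [finsetSum_coeff]
    refine Finset.sum_eq_zero fun i hi => ?_
    have := (degree_lt_iff_coeff_zero _ _).1 (hB i) k (by have := Finset.mem_range.1 hi; omega)
    simp [this]
  · intro φ
    rw [eval_eq_sum_range' (Nat.lt_succ_of_le hP), eval_finsetSum, eval_finsetSum, Finset.mul_sum,
      ← Finset.sum_add_distrib]
    refine Finset.sum_congr rfl fun i _ => ?_
    rw [h i φ]
    simp only [eval_mul, eval_C]
    ring

/-- Bernstein's inequality. -/
lemma bernstein_s6 {n : ℕ} (hn : n ≠ 0) (P : ℝ[X]) (hP : P.natDegree ≤ n)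
    (hb : ∀ x ∈ Set.Icc (-1 : ℝ) 1, |P.eval x| ≤ 1) (θ : ℝ) :
    |(derivative P).eval (cos θ) * sin θ| ≤ n := by
  obtain ⟨A, B, hB, h⟩ := expand P hP θ
  have h1 : |B.eval 1| ≤ n := by
    refine schur hn B hB (fun φ => ?_) 1 (by norm_num)
    have e1 := h φ
    have e2 := h (-φ)
    rw [cos_neg, sin_neg] at e2
    have b1 := abs_le.1 (hb (cos (θ + φ)) (cos_mem_Icc _))
    have b2 := abs_le.1 (hb (cos (θ + -φ)) (cos_mem_Icc _))
    rw [abs_le]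
    constructor <;> nlinarith
  have d1 : HasDerivAt (fun φ => P.eval (cos (θ + φ)))
      ((derivative P).eval (cos θ) * (-sin θ)) 0 := by
    have hc : HasDerivAt (fun φ => cos (θ + φ)) (-sin θ) 0 := by
      simpa using ((hasDerivAt_id (0 : ℝ)).const_add θ).cos
    have := HasDerivAt.comp (0 : ℝ) (P.hasDerivAt (cos (θ + 0))) hc
    rw [add_zero] at this
    exact this
  have d2 : HasDerivAt (fun φ => A.eval (cos φ) + sin φ * B.eval (cos φ)) (B.eval 1) 0 := by
    have hA := HasDerivAt.comp (0 : ℝ) (A.hasDerivAt (cos 0)) (hasDerivAt_cos 0)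
    have hB := HasDerivAt.comp (0 : ℝ) (B.hasDerivAt (cos 0)) (hasDerivAt_cos 0)
    have := hA.add ((hasDerivAt_sin 0).mul hB)
    convert! this using 1
    simp
  have e : (derivative P).eval (cos θ) * (-sin θ) = B.eval 1 := by
    rw [← funext h] at d2
    exact d1.unique d2
  rwa [← e, mul_neg, abs_neg] at h1

/-- The Markov brothers' inequality. -/
lemma markov {n : ℕ} (P : ℝ[X]) (hP : P.natDegree ≤ n)
    (hb : ∀ x ∈ Set.Icc (-1 : ℝ) 1, |P.eval x| ≤ 1) (y : ℝ) (hy : y ∈ Set.Icc (-1 : ℝ) 1) :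
    |(derivative P).eval y| ≤ (n : ℝ) ^ 2 := by
  rcases eq_or_ne n 0 with rfl | hn
  · rw [derivative_of_natDegree_zero (by omega)]; simp
  have hn0 : (0 : ℝ) < n := by positivity
  have h := schur hn (C (n : ℝ)⁻¹ * derivative P) (by
    rw [degree_lt_iff_coeff_zero]
    intro m hm
    rw [coeff_C_mul, coeff_derivative, coeff_eq_zero_of_natDegree_lt (by omega)]
    simp) (fun θ => by
    have := bernstein_s6 hn P hP hb θ
    rw [eval_mul, eval_C, mul_assoc, abs_mul, abs_of_pos (by positivity), inv_mul_eq_div]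
    exact (div_le_one hn0).2 this) y hy
  rw [eval_mul, eval_C, abs_mul, abs_of_pos (by positivity), inv_mul_eq_div, div_le_iff₀ hn0] at h
  rwa [sq]

/-- Bound on the divided difference. -/
lemma divided {n : ℕ} (P g : ℝ[X]) (hP : P.natDegree ≤ n)
    (hb : ∀ x ∈ Set.Icc (-1 : ℝ) 1, |P.eval x| ≤ 1) (E : ℝ) (hE : E ∈ Set.Icc (-1 : ℝ) 1)
    (hg : P - C (P.eval E) = g * (X - C E)) (x : ℝ) (hx : x ∈ Set.Icc (-1 : ℝ) 1) :
    |g.eval x| ≤ (n : ℝ) ^ 2 := by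
  rcases eq_or_ne x E with rfl | hne
  · have := congrArg (fun p => (derivative p).eval x) hg
    simp at this
    rw [← this]
    exact markov P hP hb x hx
  · have h1 := (convex_Icc (-1 : ℝ) 1).norm_image_sub_le_of_norm_deriv_le
      (f := fun x => P.eval x) (C := (n : ℝ) ^ 2)
      (fun z _ => P.differentiable z) (fun z hz => by
        rw [Polynomial.deriv, Real.norm_eq_abs]; exact markov P hP hb z hz) hE hx
    have h2 := congrArg (fun p => p.eval x) hg
    simp at h2
    simp only [Real.norm_eq_abs] at h1
    rw [h2, abs_mul] at h1
    exact le_of_mul_le_mul_right h1 (abs_pos.2 (sub_ne_zero.2 hne))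

end MarkovAux

theorem stmt6 {n : ℕ}
    (H : EuclideanSpace ℂ (Fin n) →L[ℂ] EuclideanSpace ℂ (Fin n))
    (hH : IsSelfAdjoint H) (hHnorm : ‖H‖ ≤ 1)
    (ψ : EuclideanSpace ℂ (Fin n)) (hψ : ‖ψ‖ = 1)
    (Et : ℝ) (hEt : Et ∈ Set.Icc (-1 : ℝ) 1)
    (η : ℝ) (hη : 0 ≤ η)
    (happrox : ‖H ψ - (Et : ℂ) • ψ‖ ≤ η)
    (q : ℕ) (f : Polynomial ℝ) (hdeg : f.natDegree ≤ q)
    (hb : ∀ x ∈ Set.Icc (-1 : ℝ) 1, |f.eval x| ≤ 1) :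
    ‖(Polynomial.aeval H (f.map (algebraMap ℝ ℂ))) ψ - ((f.eval Et : ℝ) : ℂ) • ψ‖
      ≤ (q : ℝ) ^ 2 * η := by
  obtain ⟨g, hg'⟩ := Polynomial.X_sub_C_dvd_sub_C_eval (a := Et) (p := f)
  have hg : f - Polynomial.C (f.eval Et) = g * (Polynomial.X - Polynomial.C Et) := by
    rw [hg', mul_comm]
  have hnorm : ‖Polynomial.aeval H g‖ ≤ (q : ℝ) ^ 2 := by
    rw [← cfc_polynomial g H hH]
    refine norm_cfc_le (by positivity) fun x hx => ?_
    refine MarkovAux.divided f g hdeg hb Et hEt hg x ?_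
    have : Nontrivial (EuclideanSpace ℂ (Fin n)) := ⟨ψ, 0, fun h => by simp [h] at hψ⟩
    have h1 := (spectrum.norm_le_norm_of_mem hx).trans hHnorm
    exact abs_le.1 h1
  rw [Polynomial.aeval_map_algebraMap]
  have key := congrArg (fun p => (Polynomial.aeval H p) ψ) hg
  simp only [map_sub, map_mul, Polynomial.aeval_C, Polynomial.aeval_X] at key
  have e1 : ∀ r : ℝ, (algebraMap ℝ (EuclideanSpace ℂ (Fin n) →L[ℂ] EuclideanSpace ℂ (Fin n)) r) ψ
      = (r : ℂ) • ψ := by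
    intro r
    rw [Algebra.algebraMap_eq_smul_one]
    simp
  have key' : (Polynomial.aeval H f) ψ - ((f.eval Et : ℝ) : ℂ) • ψ =
      (Polynomial.aeval H g) (H ψ - (Et : ℂ) • ψ) := by
    rw [← e1, ← e1]
    exact key
  rw [key']
  refine (ContinuousLinearMap.le_opNorm _ _).trans ?_
  gcongr
end
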